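/- arXiv:2002.00870 — 2 statements merged into one kernel-verified Lean document; each statement's English description precedes it below -/
import Mathlib

section
/- Let 1 ≤ p < ∞ and f ∈ L^p(ℝ^{m-1}×𝔹^m, ℋ_k). For y > 0 set g_y(x′,v) := P_H[f]((x′,y),v). Then ‖g_y − f‖_p → 0 as y → 0⁺. -/
noncomputable section

open MeasureTheory Metric Filter Topology
open scoped RealInnerProductSpace

/-- `ℝ^m` as a Euclidean space. -/
abbrev Evec (m : ℕ) : Type := EuclideanSpace ℝ (Fin m)

/-- Partial derivative in the `i`-th coordinate direction. -/
def pdv {m : ℕ} (i : Fin m) (f : Evec m → ℝ) (x : Evec m) : ℝ :=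
  fderiv ℝ f x (EuclideanSpace.single i 1)

/-- Euclidean Laplacian on `ℝ^m`. -/
def lapl {m : ℕ} (f : Evec m → ℝ) (x : Evec m) : ℝ :=
  ∑ i : Fin m, pdv i (pdv i f) x

/-- `p` is a real-valued polynomial function on `ℝ^m`, homogeneous of degree `k` and
harmonic; i.e. `p ∈ ℋ_k`. -/
def IsHk (m k : ℕ) (p : Evec m → ℝ) : Prop :=
  (∃ P : MvPolynomial (Fin m) ℝ, ∀ x : Evec m, p x = MvPolynomial.eval (fun i => x i) P) ∧
  (∀ (c : ℝ) (x : Evec m), p (c • x) = c ^ k * p x) ∧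
  (∀ x : Evec m, lapl p x = 0)

/-- The surface measure `dS` on the unit sphere `𝕊^{m-1}`, as a measure on `ℝ^m`. -/
def sphereM (m : ℕ) : Measure (Evec m) :=
  Measure.map Subtype.val ((volume : Measure (Evec m)).toSphere)

/-- `ω_m`, the surface area of the unit sphere `𝕊^{m-1}`. -/
def omegaS (m : ℕ) : ℝ := (sphereM m Set.univ).toReal

/-- The constant `c_{m,k} = 2(m+2k-2)/((m-2)ω_m)`. -/
def cmk (m k : ℕ) : ℝ := 2 * ((m : ℝ) + 2 * k - 2) / (((m : ℝ) - 2) * omegaS m)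

/-- The reflection `R_a(u) = u - 2⟨a,u⟩a/|a|²` (in Clifford notation `a u a/|a|²`). -/
def reflv {m : ℕ} (a u : Evec m) : Evec m :=
  u - (2 * ⟪a, u⟫ / ‖a‖ ^ 2) • a

/-- `dim ℋ_k`. -/
def hdim (m k : ℕ) : ℕ :=
  Nat.choose (m + k - 1) (m - 1) - Nat.choose (m + k - 3) (m - 1)

/-- `Z` is the reproducing kernel `Z_k` of `ℋ_k` on the unit sphere: a symmetric,
rotation invariant kernel, bounded by `dim ℋ_k` on the unit ball, belonging to `ℋ_k`
in the first variable and reproducing elements of `ℋ_k` from their spherical values. -/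
def IsZk (m k : ℕ) (Z : Evec m → Evec m → ℝ) : Prop :=
  (∀ v : Evec m, IsHk m k (fun u => Z u v)) ∧
  (∀ p : Evec m → ℝ, IsHk m k p → ∀ v : Evec m, (∫ u, Z u v * p u ∂(sphereM m)) = p v) ∧
  (∀ u v : Evec m, Z u v = Z v u) ∧
  (∀ u v : Evec m, ‖u‖ ≤ 1 → ‖v‖ ≤ 1 → |Z u v| ≤ (hdim m k : ℝ)) ∧
  (∀ (A : Evec m ≃ₗᵢ[ℝ] Evec m) (u v : Evec m), Z (A u) (A v) = Z u v)

/-- The point `(x', y) ∈ ℝ^{d+1}` with first `d` coordinates `x'` and last coordinate `y`. -/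
def upP (d : ℕ) (x' : Evec d) (y : ℝ) : Evec (d + 1) :=
  (EuclideanSpace.equiv (Fin (d + 1)) ℝ).symm
    (Fin.snoc (⇑(EuclideanSpace.equiv (Fin d) ℝ) x') y)

/-- The first `d` coordinates of a point of `ℝ^{d+1}`. -/
def downP (d : ℕ) (x : Evec (d + 1)) : Evec d :=
  (EuclideanSpace.equiv (Fin d) ℝ).symm (fun i => x (Fin.castSucc i))

/-- The last coordinate of a point of `ℝ^{d+1}`. -/
def lastP (d : ℕ) (x : Evec (d + 1)) : ℝ := x (Fin.last d)

/-- The Poisson kernel `P_H` for bosonic Laplacians in the upper half-space `ℝ^{d+1}_+`,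
`P_H(x,t,u,v) = c_{m,k} (y/|x-t|^m) Z_k(R_{x-t}(u), v)` with `m = d+1`, `x = (x',y)`,
`t = (t',0)`. -/
def PH (d k : ℕ) (Z : Evec (d + 1) → Evec (d + 1) → ℝ) (x' : Evec d) (y : ℝ)
    (t' : Evec d) (u v : Evec (d + 1)) : ℝ :=
  cmk (d + 1) k * (y / ‖upP d x' y - upP d t' 0‖ ^ (d + 1)) *
    Z (reflv (upP d x' y - upP d t' 0) u) v

/-- The Poisson integral `P_H[f]` in the upper half-space. -/
def PHint (d k : ℕ) (Z : Evec (d + 1) → Evec (d + 1) → ℝ)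
    (f : Evec d → Evec (d + 1) → ℝ) (x' : Evec d) (y : ℝ) (v : Evec (d + 1)) : ℝ :=
  ∫ t' : Evec d, (∫ u, PH d k Z x' y t' u v * f t' u ∂(sphereM (d + 1)))

/-- The Poisson kernel `P_B` for bosonic Laplacians in the unit ball. -/
def PB (m k : ℕ) (Z : Evec m → Evec m → ℝ) (x ζ ω ν : Evec m) : ℝ :=
  (cmk m k / 2) * ((1 - ‖x‖ ^ 2) / ‖x - ζ‖ ^ m) * Z (reflv (x - ζ) ω) ν

/-- The Poisson integral `P_B[h]` in the unit ball. -/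
def PBint (m k : ℕ) (Z : Evec m → Evec m → ℝ) (h : Evec m → Evec m → ℝ)
    (x ν : Evec m) : ℝ :=
  ∫ ζ, (∫ ω, PB m k Z x ζ ω ν * h ζ ω ∂(sphereM m)) ∂(sphereM m)

/-- Partial derivative in the first (`x`) variable. -/
def pd1 {m : ℕ} (i : Fin m) (f : Evec m → Evec m → ℝ) : Evec m → Evec m → ℝ :=
  fun x u => fderiv ℝ (fun x₁ => f x₁ u) x (EuclideanSpace.single i 1)

/-- Partial derivative in the second (`u`) variable. -/
def pd2 {m : ℕ} (i : Fin m) (f : Evec m → Evec m → ℝ) : Evec m → Evec m → ℝ :=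
  fun x u => fderiv ℝ (fun u₁ => f x u₁) u (EuclideanSpace.single i 1)

/-- The bosonic Laplacian `𝒟_k`. -/
def Dk (m k : ℕ) (f : Evec m → Evec m → ℝ) : Evec m → Evec m → ℝ := fun x u =>
  (∑ i : Fin m, pd1 i (pd1 i f) x u)
    - (4 / ((m : ℝ) + 2 * k - 2)) *
        ∑ i : Fin m, ∑ j : Fin m, u i * pd1 i (pd2 j (pd1 j f)) x u
    + (4 * ‖u‖ ^ 2 / (((m : ℝ) + 2 * k - 2) * ((m : ℝ) + 2 * k - 4))) *
        ∑ i : Fin m, ∑ j : Fin m, pd2 i (pd1 i (pd2 j (pd1 j f))) x u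

/-- `f ∈ C²(Ω×𝔹^m, ℋ_k)`: twice continuously differentiable on `Ω × 𝔹^m` and, for each
fixed `x ∈ Ω`, coinciding in the second variable with an element of `ℋ_k`. -/
def C2Hk (m k : ℕ) (Ω : Set (Evec m)) (f : Evec m → Evec m → ℝ) : Prop :=
  ContDiffOn ℝ 2 (fun q : Evec m × Evec m => f q.1 q.2) (Ω ×ˢ ball (0 : Evec m) 1) ∧
  ∀ x ∈ Ω, ∃ q, IsHk m k q ∧ ∀ u ∈ closedBall (0 : Evec m) 1, f x u = q u

/-- The `L^p` norm `(∫_{ℝ^{m-1}} ∫_{𝕊^{m-1}} |f(x',u)|^p dS(u) dx')^{1/p}` (`m = d+1`),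
valued in `ℝ≥0∞`. -/
def lpH (d : ℕ) (p : ℝ) (f : Evec d → Evec (d + 1) → ℝ) : ENNReal :=
  (∫⁻ x' : Evec d, ∫⁻ u, ENNReal.ofReal (|f x' u| ^ p) ∂(sphereM (d + 1))) ^ (1 / p)

/-- `f ∈ L^p(ℝ^{m-1}×𝔹^m, ℋ_k)` (`m = d+1`). -/
def MemLpH (d k : ℕ) (p : ℝ) (f : Evec d → Evec (d + 1) → ℝ) : Prop :=
  Measurable (fun q : Evec d × Evec (d + 1) => f q.1 q.2) ∧
  (∀ x' : Evec d, ∃ q, IsHk (d + 1) k q ∧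
    ∀ u ∈ closedBall (0 : Evec (d + 1)) 1, f x' u = q u) ∧
  lpH d p f < ⊤

/-- The `L^p` norm `(∫_{𝕊^{m-1}} ∫_{𝕊^{m-1}} |h(ζ,ω)|^p dS(ω) dS(ζ))^{1/p}`,
valued in `ℝ≥0∞`. -/
def lpS (m : ℕ) (p : ℝ) (h : Evec m → Evec m → ℝ) : ENNReal :=
  (∫⁻ ζ, ∫⁻ ω, ENNReal.ofReal (|h ζ ω| ^ p) ∂(sphereM m) ∂(sphereM m)) ^ (1 / p)

/-- `h ∈ L^p(𝕊^{m-1}×𝔹^m, ℋ_k)`. -/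
def MemLpS (m k : ℕ) (p : ℝ) (h : Evec m → Evec m → ℝ) : Prop :=
  Measurable (fun q : Evec m × Evec m => h q.1 q.2) ∧
  (∀ ζ : Evec m, ‖ζ‖ = 1 → ∃ q, IsHk m k q ∧
    ∀ ω ∈ closedBall (0 : Evec m) 1, h ζ ω = q ω) ∧
  lpS m p h < ⊤

/-- Iterated partial derivative `D_x^α` in the first variable, for a multi-index `α ∈ ℕ^m`. -/
def Dx {m : ℕ} (α : Fin m → ℕ) (f : Evec m → Evec m → ℝ) : Evec m → Evec m → ℝ :=
  (List.finRange m).foldr (fun i g => (pd1 i)^[α i] g) f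

/-- Iterated partial derivative `D_ν^β` in the second variable, for a multi-index `β ∈ ℕ^m`. -/
def Dv {m : ℕ} (β : Fin m → ℕ) (f : Evec m → Evec m → ℝ) : Evec m → Evec m → ℝ :=
  (List.finRange m).foldr (fun i g => (pd2 i)^[β i] g) f

open MvPolynomial in
/-- The derivative of a polynomial function in a coordinate direction is given by `pderiv`. -/
theorem hasFDerivAt_mvPolynomial_eval {m : ℕ} (P : MvPolynomial (Fin m) ℝ) (x : Evec m) :
    HasFDerivAt (fun x : Evec m => eval (fun i => x i) P)
      (∑ i, eval (fun i => x i) (pderiv i P) • (EuclideanSpace.proj i : Evec m →L[ℝ] ℝ)) x := by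
  induction P using MvPolynomial.induction_on with
  | C a => simpa using hasFDerivAt_const a x
  | add p q hp hq =>
    simp only [map_add, add_smul, Finset.sum_add_distrib]
    exact hp.add hq
  | mul_X p j hp =>
    have hj : HasFDerivAt (fun x : Evec m => x j) (EuclideanSpace.proj j : Evec m →L[ℝ] ℝ) x :=
      (EuclideanSpace.proj j : Evec m →L[ℝ] ℝ).hasFDerivAt
    have := hp.mul hj
    simp only [map_mul, eval_X]
    refine this.congr_fderiv ?_
    ext v
    simp [pderiv_X, Derivation.leibniz, Pi.single_apply, add_mul, Finset.sum_add_distrib,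
      Finset.mul_sum, apply_ite, ite_mul, mul_assoc]

/-- Polynomial Laplacian. -/
def polyLapl {m : ℕ} (P : MvPolynomial (Fin m) ℝ) : MvPolynomial (Fin m) ℝ :=
  ∑ i, MvPolynomial.pderiv i (MvPolynomial.pderiv i P)

open MvPolynomial in
theorem pdv_mvPolynomial_eval {m : ℕ} (i : Fin m) (P : MvPolynomial (Fin m) ℝ) :
    pdv i (fun x : Evec m => eval (fun i => x i) P) = fun x => eval (fun i => x i) (pderiv i P) := by
  funext x
  rw [pdv, (hasFDerivAt_mvPolynomial_eval P x).fderiv]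
  simp [PiLp.single_apply]

open MvPolynomial in
theorem lapl_mvPolynomial_eval {m : ℕ} (P : MvPolynomial (Fin m) ℝ) (x : Evec m) :
    lapl (fun x : Evec m => eval (fun i => x i) P) x = eval (fun i => x i) (polyLapl P) := by
  simp [lapl, polyLapl, pdv_mvPolynomial_eval]

open MvPolynomial in
/-- The translated polynomial `ζ ↦ P(v + ζ)`. -/
def polyTranslate {m : ℕ} (v : Evec m) : MvPolynomial (Fin m) ℝ →ₐ[ℝ] MvPolynomial (Fin m) ℝ :=
  aeval fun i => C (v i) + X i

open MvPolynomial in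
theorem eval_polyTranslate {m : ℕ} (v : Evec m) (P : MvPolynomial (Fin m) ℝ) (x : Fin m → ℝ) :
    eval x (polyTranslate v P) = eval (fun i => v i + x i) P := by
  induction P using MvPolynomial.induction_on with
  | C a => simp [polyTranslate]
  | add p q hp hq => simp [hp, hq]
  | mul_X p j hp => simp [hp]; simp [polyTranslate]

open MvPolynomial in
theorem pderiv_polyTranslate {m : ℕ} (v : Evec m) (i : Fin m) (P : MvPolynomial (Fin m) ℝ) :
    pderiv i (polyTranslate v P) = polyTranslate v (pderiv i P) := by
  induction P using MvPolynomial.induction_on with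
  | C a => simp [polyTranslate]
  | add p q hp hq => simp [hp, hq]
  | mul_X p j hp =>
    have h : pderiv i (polyTranslate v (X j)) = polyTranslate v (pderiv i (X j)) := by
      simp only [polyTranslate, aeval_X, map_add, pderiv_C, zero_add, pderiv_X, Pi.single_apply]
      split_ifs <;> simp
    simp [hp, h]

open MvPolynomial in
theorem pderiv_homogeneousComponent {m : ℕ} (i : Fin m) (n : ℕ) (P : MvPolynomial (Fin m) ℝ) :
    pderiv i (homogeneousComponent (n + 1) P) = homogeneousComponent n (pderiv i P) := by
  have hsum := sum_homogeneousComponent P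
  conv_rhs => rw [← hsum]
  rw [map_sum, map_sum]
  have h : ∀ j, homogeneousComponent n (pderiv i (homogeneousComponent j P))
      = if j = n + 1 then pderiv i (homogeneousComponent j P) else 0 := by
    intro j
    rcases j with _ | j
    · simp
    · rw [homogeneousComponent_of_mem ((homogeneousComponent_isHomogeneous (j + 1) P).pderiv (i := i))]
      simp [eq_comm]
  simp only [h, Finset.sum_ite_eq', Finset.mem_range]
  split_ifs with hn
  · rfl
  · rw [homogeneousComponent_eq_zero _ _ (by omega), map_zero]

theorem polyLapl_homogeneousComponent {m : ℕ} {P : MvPolynomial (Fin m) ℝ} (hP : polyLapl P = 0)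
    (n : ℕ) : polyLapl (MvPolynomial.homogeneousComponent n P) = 0 := by
  rcases n with _ | _ | n
  · simp [polyLapl]
  · simp [polyLapl, pderiv_homogeneousComponent]
  · simp only [polyLapl, pderiv_homogeneousComponent] at hP ⊢
    rw [← map_sum, hP, map_zero]

open MvPolynomial in
theorem MvPolynomial.IsHomogeneous.eval_smul {m n : ℕ} {P : MvPolynomial (Fin m) ℝ}
    (hP : P.IsHomogeneous n) (s : ℝ) (x : Fin m → ℝ) :
    eval (fun i => s * x i) P = s ^ n * eval x P := by
  rw [eval_eq', eval_eq', Finset.mul_sum]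
  refine Finset.sum_congr rfl fun d hd => ?_
  have hdn : ∑ i, d i = n := by
    have := hP (mem_support_iff.mp hd)
    rwa [Finsupp.weight_apply, Finsupp.sum_fintype _ _ (by simp), Finset.sum_congr rfl
      (fun i _ => by simp : ∀ i ∈ Finset.univ, d i • (1 : Fin m → ℕ) i = d i)] at this
  simp only [mul_pow, Finset.prod_mul_distrib, Finset.prod_pow_eq_pow_sum, hdn]
  ring

open MvPolynomial in
/-- Homogeneous Taylor expansion of an element of `ℋ_k` at a point: the components are harmonic,
and their values at the base point are given by Euler's identity. -/
theorem IsHk.exists_taylor {m k : ℕ} {q : Evec m → ℝ} (hq : IsHk m k q) (v : Evec m) :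
    ∃ (N : ℕ) (H : ℕ → MvPolynomial (Fin m) ℝ), k < N ∧
      (∀ j, (H j).IsHomogeneous j) ∧ (∀ j, polyLapl (H j) = 0) ∧
      (∀ j, eval (fun i => v i) (H j) = (k.choose j : ℝ) * q v) ∧
      ∀ (s : ℝ) (ζ : Evec m),
        q (v + s • ζ) = ∑ j ∈ Finset.range N, s ^ j * eval (fun i => ζ i) (H j) := by
  obtain ⟨⟨P, hP⟩, hhom, hharm⟩ := hq
  have hq : q = fun x : Evec m => eval (fun i => x i) P := funext hP
  set Q := polyTranslate v P with hQ
  have hexp : ∀ N, Q.totalDegree < N → ∀ (s : ℝ) (ζ : Evec m),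
        q (v + s • ζ) = ∑ j ∈ Finset.range N,
          s ^ j * eval (fun i => ζ i) (homogeneousComponent j Q) := by
    intro N hN s ζ
    have h1 : q (v + s • ζ) = eval (s • fun i => ζ i) Q := by
      rw [hP, hQ, eval_polyTranslate]; rfl
    have h2 : ∑ j ∈ Finset.range N, homogeneousComponent j Q = Q := by
      conv_rhs => rw [← sum_homogeneousComponent Q]
      symm
      apply Finset.sum_subset
      · intro j; simp only [Finset.mem_range]; omega
      · intro j _ hj
        exact homogeneousComponent_eq_zero _ _ (by simpa using hj)
    rw [h1]
    conv_lhs => rw [← h2, map_sum]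
    exact Finset.sum_congr rfl fun j _ =>
      (homogeneousComponent_isHomogeneous j Q).eval_smul s _
  have hlapl : polyLapl Q = 0 := by
    have hP0 : polyLapl P = 0 := by
      refine MvPolynomial.funext fun x => ?_
      have := hharm (WithLp.toLp 2 x)
      rw [hq, lapl_mvPolynomial_eval] at this
      simpa using this
    simp only [polyLapl, hQ, pderiv_polyTranslate] at hP0 ⊢
    rw [← map_sum, hP0, map_zero]
  refine ⟨max (Q.totalDegree + 1) (k + 1), fun j => homogeneousComponent j Q, by omega,
    fun j => homogeneousComponent_isHomogeneous j Q,
    fun j => polyLapl_homogeneousComponent hlapl j, fun j => ?_, hexp _ (by omega)⟩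
  set N := max (max (Q.totalDegree + 1) (k + 1)) (j + 1)
  have hpoly : ∑ j ∈ Finset.range N,
      Polynomial.C (eval (fun i => v i) (homogeneousComponent j Q)) * Polynomial.X ^ j
      = Polynomial.C (q v) * (1 + Polynomial.X) ^ k := by
    refine Polynomial.funext fun s => ?_
    have h := hexp N (by omega) s v
    rw [show v + s • v = (1 + s) • v by rw [add_smul, one_smul], hhom] at h
    simp only [Polynomial.eval_finsetSum, Polynomial.eval_mul, Polynomial.eval_C,
      Polynomial.eval_pow, Polynomial.eval_X, Polynomial.eval_add, Polynomial.eval_one]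
    rw [mul_comm (q v), h]
    exact Finset.sum_congr rfl fun _ _ => mul_comm _ _
  have hc := congrArg (Polynomial.coeff · j) hpoly
  simp only [Polynomial.finsetSum_coeff, Polynomial.coeff_C_mul, Polynomial.coeff_X_pow,
    Polynomial.coeff_one_add_X_pow, mul_ite, mul_one, mul_zero, Finset.sum_ite_eq,
    Finset.mem_range] at hc
  rw [if_pos (by omega)] at hc
  rw [hc, mul_comm]

open MvPolynomial in
theorem integrable_mvPolynomial_mul_exp {m : ℕ} (P : MvPolynomial (Fin m) ℝ) :
    Integrable (fun x : Evec m => eval (fun i => x i) P * Real.exp (-‖x‖ ^ 2)) := by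
  have hmono : ∀ n : ℕ, Integrable (fun t : ℝ => t ^ n * Real.exp (-t ^ 2)) := fun n => by
    have := integrable_rpow_mul_exp_neg_mul_sq (b := 1) one_pos (s := n) (lt_of_lt_of_le (by norm_num) (Nat.cast_nonneg n))
    simpa using this
  have h1 : ∀ d : Fin m →₀ ℕ,
      Integrable (fun x : Evec m => (∏ i, x i ^ d i) * Real.exp (-‖x‖ ^ 2)) := fun d => by
    have h := Integrable.fintype_prod (f := fun (i : Fin m) (t : ℝ) => t ^ d i * Real.exp (-t ^ 2))
      (μ := fun _ => volume) fun i => hmono (d i)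
    have h' := (PiLp.volume_preserving_ofLp (Fin m)).integrable_comp_of_integrable h
    refine h'.congr (.of_forall fun x => ?_)
    simp [Finset.prod_mul_distrib, EuclideanSpace.norm_sq_eq, ← Real.exp_sum]
  simp only [eval_eq', Finset.sum_mul]
  refine integrable_finsetSum _ fun d _ => ?_
  simpa only [mul_assoc] using (h1 d).const_mul (coeff d P)

/-- The Gaussian integral of a polynomial. -/
def gaussInt {m : ℕ} (P : MvPolynomial (Fin m) ℝ) : ℝ :=
  ∫ x : Evec m, MvPolynomial.eval (fun i => x i) P * Real.exp (-‖x‖ ^ 2)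

open MvPolynomial in
theorem gaussInt_sum {m : ℕ} {ι : Type*} (s : Finset ι) (P : ι → MvPolynomial (Fin m) ℝ) :
    gaussInt (∑ i ∈ s, P i) = ∑ i ∈ s, gaussInt (P i) := by
  simp only [gaussInt, map_sum, Finset.sum_mul]
  exact integral_finsetSum _ fun i _ => integrable_mvPolynomial_mul_exp _

theorem gaussInt_C_mul {m : ℕ} (c : ℝ) (P : MvPolynomial (Fin m) ℝ) :
    gaussInt (MvPolynomial.C c * P) = c * gaussInt P := by
  simp only [gaussInt, map_mul, MvPolynomial.eval_C, mul_assoc]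
  exact integral_const_mul _ _

theorem gaussInt_one (m : ℕ) : gaussInt (1 : MvPolynomial (Fin m) ℝ) = Real.pi ^ ((m : ℝ) / 2) := by
  have := GaussianFourier.integral_rexp_neg_mul_sq_norm (V := Evec m) one_pos
  simpa [gaussInt] using this

open MvPolynomial in
/-- Gaussian integration by parts. -/
theorem gaussInt_X_mul {m : ℕ} (i : Fin m) (P : MvPolynomial (Fin m) ℝ) :
    2 * gaussInt (X i * P) = gaussInt (pderiv i P) := by
  have hg : ∀ x : Evec m, HasFDerivAt (fun x : Evec m => Real.exp (-‖x‖ ^ 2))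
      (Real.exp (-‖x‖ ^ 2) • -((2 : ℕ) • (innerSL ℝ x : Evec m →L[ℝ] ℝ))) x := fun x =>
    ((hasStrictFDerivAt_norm_sq x).hasFDerivAt.neg).exp
  have hP : ∀ x : Evec m, pdv i (fun x : Evec m => eval (fun i => x i) P) x
      = eval (fun i => x i) (pderiv i P) := fun x => by rw [pdv_mvPolynomial_eval]
  have hg' : ∀ x : Evec m, fderiv ℝ (fun x : Evec m => Real.exp (-‖x‖ ^ 2)) x
      (EuclideanSpace.single i 1) = - (2 * x i * Real.exp (-‖x‖ ^ 2)) := fun x => by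
    rw [(hg x).fderiv]
    simp [EuclideanSpace.inner_single_right]
    ring
  have key := integral_mul_fderiv_eq_neg_fderiv_mul_of_integrable (μ := (volume : Measure (Evec m)))
    (f := fun x : Evec m => eval (fun i => x i) P) (g := fun x => Real.exp (-‖x‖ ^ 2))
    (v := EuclideanSpace.single i 1) ?_ ?_ (integrable_mvPolynomial_mul_exp P)
    (fun x _ => (hasFDerivAt_mvPolynomial_eval P x).differentiableAt)
    (fun x _ => (hg x).differentiableAt)
  · simp only [pdv] at hP
    simp only [hP, hg'] at key
    simp only [gaussInt]
    rw [← integral_const_mul, ← neg_inj, ← key, ← integral_neg]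
    congr 1; ext x
    simp; ring
  · simp only [pdv] at hP
    simpa only [hP] using integrable_mvPolynomial_mul_exp (pderiv i P)
  · simp only [hg']
    refine ((integrable_mvPolynomial_mul_exp (X i * P)).const_mul (-2)).congr (.of_forall fun x => ?_)
    simp; ring

open MvPolynomial in
/-- The linear form `⟨·, v⟩`. -/
def linForm {m : ℕ} (v : Evec m) : MvPolynomial (Fin m) ℝ := ∑ i, C (v i) * X i

open MvPolynomial in
theorem eval_linForm {m : ℕ} (v x : Evec m) : eval (fun i => x i) (linForm v) = ⟪x, v⟫ := by
  simp [linForm, PiLp.inner_apply]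

open MvPolynomial in
theorem pderiv_linForm {m : ℕ} (v : Evec m) (i : Fin m) : pderiv i (linForm v) = C (v i) := by
  simp [linForm, pderiv_X, Derivation.leibniz, Pi.single_apply]

theorem pderiv_polyLapl {m : ℕ} (i : Fin m) (P : MvPolynomial (Fin m) ℝ) :
    polyLapl (MvPolynomial.pderiv i P) = MvPolynomial.pderiv i (polyLapl P) := by
  simp only [polyLapl, map_sum]
  refine Finset.sum_congr rfl fun j _ => ?_
  have hcomm : ∀ Q : MvPolynomial (Fin m) ℝ, MvPolynomial.pderiv j (MvPolynomial.pderiv i Q)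
      = MvPolynomial.pderiv i (MvPolynomial.pderiv j Q) := fun Q => by
    have h : ⁅MvPolynomial.pderiv (R := ℝ) j, MvPolynomial.pderiv (R := ℝ) i⁆ = 0 := by
      refine MvPolynomial.derivation_ext fun n => ?_
      simp only [Derivation.commutator_apply, MvPolynomial.pderiv_X, Pi.single_apply]
      split_ifs <;> simp
    have := congrArg (fun D => D Q) h
    simpa [Derivation.commutator_apply, sub_eq_zero] using this
  rw [hcomm, hcomm]

open MvPolynomial in
/-- Pairing a harmonic homogeneous polynomial with the same power of a linear form reproduces
its value. -/
theorem gaussInt_linForm_pow_mul {m : ℕ} (v : Evec m) (j : ℕ) (H : MvPolynomial (Fin m) ℝ)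
    (hH : H.IsHomogeneous j) (hl : polyLapl H = 0) :
    gaussInt (linForm v ^ j * H)
      = (j.factorial / 2 ^ j : ℝ) * eval (fun i => v i) H * gaussInt (1 : MvPolynomial (Fin m) ℝ) := by
  induction j generalizing H with
  | zero =>
    rw [← totalDegree_zero_iff_isHomogeneous, totalDegree_eq_zero_iff_eq_C] at hH
    rw [hH, pow_zero, mul_comm, gaussInt_C_mul]
    simp
  | succ j ih =>
    set D : MvPolynomial (Fin m) ℝ := ∑ i, C (v i) * pderiv i H with hD
    have hDhom : D.IsHomogeneous j := by
      refine IsHomogeneous.sum _ _ _ fun i _ => ?_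
      have := (isHomogeneous_C (Fin m) (v i)).mul (hH.pderiv (i := i))
      simpa using this
    have hDl : polyLapl D = 0 := by
      have : polyLapl D = ∑ i, C (v i) * polyLapl (pderiv i H) := by
        simp only [hD, polyLapl, map_sum, pderiv_C_mul, Finset.mul_sum]
        rw [Finset.sum_comm]
      rw [this]
      simp [pderiv_polyLapl, hl]
    have hDv : eval (fun i => v i) D = (j + 1) * eval (fun i => v i) H := by
      have := congrArg (eval (fun i => v i)) hH.sum_X_mul_pderiv
      simpa [hD] using this
    have hstep : 2 * (j + 1) * gaussInt (linForm v ^ (j + 1) * H)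
        = (j + 1) * gaussInt (linForm v ^ j * D) := by
      have hE : C ((j : ℝ) + 1) * (linForm v ^ (j + 1) * H)
          = ∑ i, X i * (linForm v ^ (j + 1) * pderiv i H) := by
        have := congrArg (linForm v ^ (j + 1) * ·) hH.sum_X_mul_pderiv
        simp only [Finset.mul_sum, nsmul_eq_mul] at this
        rw [Finset.sum_congr rfl (fun i _ => by ring :
          ∀ i ∈ Finset.univ, X i * (linForm v ^ (j + 1) * pderiv i H)
            = linForm v ^ (j + 1) * (X i * pderiv i H)), this]
        simp
        ring
      calc 2 * (j + 1) * gaussInt (linForm v ^ (j + 1) * H)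
          = 2 * gaussInt (C ((j : ℝ) + 1) * (linForm v ^ (j + 1) * H)) := by
            rw [gaussInt_C_mul]; ring
        _ = gaussInt (∑ i, pderiv i (linForm v ^ (j + 1) * pderiv i H)) := by
            rw [hE, gaussInt_sum, gaussInt_sum, Finset.mul_sum]
            exact Finset.sum_congr rfl fun i _ => gaussInt_X_mul _ _
        _ = gaussInt (linForm v ^ (j + 1) * polyLapl H
              + C ((j : ℝ) + 1) * (linForm v ^ j * D)) := by
            congr 1
            rw [polyLapl, hD, Finset.mul_sum, Finset.mul_sum, Finset.mul_sum,
              ← Finset.sum_add_distrib]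
            refine Finset.sum_congr rfl fun i _ => ?_
            rw [pderiv_mul, pderiv_pow, pderiv_linForm]
            simp
            ring
        _ = _ := by rw [hl, mul_zero, zero_add, gaussInt_C_mul]
    rw [ih D hDhom hDl, hDv] at hstep
    have : (0 : ℝ) < j + 1 := by positivity
    rw [Nat.factorial_succ, pow_succ (2 : ℝ)]
    push_cast
    field_simp at hstep ⊢
    linarith

theorem upP_castSucc (d : ℕ) (s : Evec d) (t : ℝ) (i : Fin d) : upP d s t i.castSucc = s i := by
  simp [upP]

theorem upP_last (d : ℕ) (s : Evec d) (t : ℝ) : upP d s t (Fin.last d) = t := by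
  simp [upP]

theorem norm_upP_sq (d : ℕ) (s : Evec d) (t : ℝ) : ‖upP d s t‖ ^ 2 = ‖s‖ ^ 2 + t ^ 2 := by
  simp [EuclideanSpace.norm_sq_eq, Fin.sum_univ_castSucc, upP_castSucc, upP_last]

theorem upP_smul (d : ℕ) (s : Evec d) (t c : ℝ) : upP d (c • s) (c * t) = c • upP d s t := by
  ext i
  refine Fin.lastCases ?_ (fun i => ?_) i
  · simp [upP_last]
  · simp [upP_castSucc]

theorem upP_sub (d : ℕ) (s s' : Evec d) (t t' : ℝ) :
    upP d s t - upP d s' t' = upP d (s - s') (t - t') := by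
  ext i
  refine Fin.lastCases ?_ (fun i => ?_) i
  · simp [upP_last]
  · simp [upP_castSucc]

theorem continuous_upP (d : ℕ) : Continuous fun q : Evec d × ℝ => upP d q.1 q.2 := by
  refine (EuclideanSpace.equiv (Fin (d + 1)) ℝ).symm.continuous.comp ?_
  refine continuous_pi fun i => ?_
  refine Fin.lastCases ?_ (fun i => ?_) i
  · simpa using continuous_snd
  · simp only [Fin.snoc_castSucc]
    exact (EuclideanSpace.proj i : Evec d →L[ℝ] ℝ).continuous.comp continuous_fst

theorem one_le_norm_upP_one (d : ℕ) (s : Evec d) : 1 ≤ ‖upP d s 1‖ := by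
  have := norm_upP_sq d s 1
  nlinarith [norm_nonneg (upP d s 1), sq_nonneg ‖s‖]

theorem measurePreserving_upP (d : ℕ) :
    MeasurePreserving (fun q : Evec d × ℝ => upP d q.1 q.2) := by
  have h1 := (PiLp.volume_preserving_ofLp (Fin d)).prod (MeasurePreserving.id (volume : Measure ℝ))
  have h2 := (volume_preserving_piFinSuccAbove (fun _ : Fin (d + 1) => ℝ) (Fin.last d)).symm
  change MeasurePreserving _ ((volume : Measure (Evec d)).prod (volume : Measure ℝ)) volume
  have h3 := (PiLp.volume_preserving_toLp (Fin (d + 1))).comp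
    (h2.comp ((Measure.measurePreserving_swap).comp h1))
  suffices heq : (fun q : Evec d × ℝ => upP d q.1 q.2) = WithLp.toLp 2 ∘
      (MeasurableEquiv.piFinSuccAbove (fun _ => ℝ) (Fin.last d)).symm ∘
        Prod.swap ∘ Prod.map WithLp.ofLp id by
    rw [heq]; exact h3
  ext q i
  refine Fin.lastCases ?_ (fun i => ?_) i
  · simp [upP_last, MeasurableEquiv.piFinSuccAbove]
  · simp [upP_castSucc, MeasurableEquiv.piFinSuccAbove]

open MvPolynomial in
theorem MvPolynomial.IsHomogeneous.abs_eval_le {m n : ℕ} {P : MvPolynomial (Fin m) ℝ}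
    (hP : P.IsHomogeneous n) :
    ∃ C : ℝ, ∀ x : Evec m, |eval (fun i => x i) P| ≤ C * ‖x‖ ^ n := by
  refine ⟨∑ e ∈ P.support, |coeff e P|, fun x => ?_⟩
  rw [eval_eq', Finset.sum_mul]
  refine (Finset.abs_sum_le_sum_abs _ _).trans (Finset.sum_le_sum fun e he => ?_)
  have hen : ∑ i, e i = n := by
    have := hP (mem_support_iff.mp he)
    rwa [Finsupp.weight_apply, Finsupp.sum_fintype _ _ (by simp), Finset.sum_congr rfl
      (fun i _ => by simp : ∀ i ∈ Finset.univ, e i • (1 : Fin m → ℕ) i = e i)] at this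
  rw [abs_mul, Finset.abs_prod, ← hen, ← Finset.prod_pow_eq_pow_sum]
  refine mul_le_mul_of_nonneg_left (Finset.prod_le_prod (fun _ _ => abs_nonneg _) fun i _ => ?_)
    (abs_nonneg _)
  rw [abs_pow]
  exact pow_le_pow_left₀ (abs_nonneg _) (by simpa using PiLp.norm_apply_le x i) _

theorem continuous_mvPolynomial_eval {m : ℕ} (P : MvPolynomial (Fin m) ℝ) :
    Continuous fun x : Evec m => MvPolynomial.eval (fun i => x i) P :=
  continuous_iff_continuousAt.mpr fun x => (hasFDerivAt_mvPolynomial_eval P x).continuousAt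

theorem continuous_upP_one (d : ℕ) : Continuous fun s : Evec d => upP d s 1 :=
  (continuous_upP d).comp (continuous_id.prodMk continuous_const)

/-- The weight `(1 + |s|²)^{-(d+1)/2}`. -/
def poissonWeight (d : ℕ) (s : Evec d) : ℝ := 1 / ‖upP d s 1‖ ^ (d + 1)

theorem poissonWeight_nonneg (d : ℕ) (s : Evec d) : 0 ≤ poissonWeight d s := by
  unfold poissonWeight; positivity

theorem continuous_poissonWeight (d : ℕ) : Continuous (poissonWeight d) := by
  refine continuous_const.div ((continuous_upP_one d).norm.pow _) fun s => ?_
  have := one_le_norm_upP_one d s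
  positivity

theorem integrable_poissonWeight (d : ℕ) : Integrable (poissonWeight d) := by
  have h := integrable_rpow_neg_one_add_norm_sq (E := Evec d) (μ := volume) (r := d + 1) (by simp)
  refine h.congr (.of_forall fun s => ?_)
  simp only [poissonWeight]
  rw [show 1 + ‖s‖ ^ 2 = ‖upP d s 1‖ ^ 2 by rw [norm_upP_sq]; ring, ← Real.rpow_natCast,
    ← Real.rpow_mul (norm_nonneg _), one_div, ← Real.rpow_natCast, ← Real.rpow_neg (norm_nonneg _)]
  congr 1
  push_cast
  ring

open MvPolynomial in
theorem integrable_poissonWeight_mul_eval {d n : ℕ} {P : MvPolynomial (Fin (d + 1)) ℝ}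
    (hP : P.IsHomogeneous n) :
    Integrable fun s : Evec d =>
      poissonWeight d s * (eval (fun i => upP d s 1 i) P / ‖upP d s 1‖ ^ n) := by
  have hr : ∀ s : Evec d, 0 < ‖upP d s 1‖ := fun s => one_pos.trans_le (one_le_norm_upP_one d s)
  obtain ⟨C, hC⟩ := hP.abs_eval_le
  refine (((integrable_poissonWeight d).mul_const C)).mono' ?_ (.of_forall fun s => ?_)
  · have hcP : Continuous fun s : Evec d => eval (fun i => upP d s 1 i) P :=
      (continuous_mvPolynomial_eval P).comp (continuous_upP_one d)
    exact ((continuous_poissonWeight d).mul (hcP.div₀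
      ((continuous_upP_one d).norm.pow _) fun s => (pow_pos (hr s) n).ne')).aestronglyMeasurable
  · have h := hC (upP d s 1)
    have := hr s
    rw [norm_mul, Real.norm_of_nonneg (poissonWeight_nonneg d s)]
    refine mul_le_mul_of_nonneg_left ?_ (poissonWeight_nonneg d s)
    rw [norm_div, Real.norm_eq_abs, norm_pow, norm_norm, div_le_iff₀ (by positivity)]
    exact h

theorem integrable_abs_pow_mul_exp (n : ℕ) {b : ℝ} (hb : 0 < b) :
    Integrable fun t : ℝ => |t| ^ n * Real.exp (-b * t ^ 2) := by
  have h := (integrable_rpow_mul_exp_neg_mul_sq hb (s := n)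
    (lt_of_lt_of_le (by norm_num) (Nat.cast_nonneg n))).norm
  refine h.congr (.of_forall fun t => ?_)
  simp

theorem integral_abs_pow_mul_exp (n : ℕ) {r : ℝ} (hr : 0 < r) :
    ∫ t : ℝ, |t| ^ n * Real.exp (-r ^ 2 * t ^ 2) = Real.Gamma ((n + 1) / 2) / r ^ (n + 1) := by
  have h1 := integral_comp_abs (f := fun t : ℝ => t ^ n * Real.exp (-r ^ 2 * t ^ 2))
  simp only [sq_abs] at h1
  have h2 := integral_rpow_mul_exp_neg_mul_rpow (p := 2) (q := n) two_pos
    (lt_of_lt_of_le (by norm_num) (Nat.cast_nonneg n)) (pow_pos hr 2)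
  simp only [Real.rpow_natCast, Real.rpow_ofNat] at h2
  rw [h1, h2, ← Real.rpow_natCast r 2, ← Real.rpow_mul hr.le]
  rw [show ((2 : ℕ) : ℝ) * (-((n : ℝ) + 1) / 2) = -((n + 1 : ℕ) : ℝ) by push_cast; ring,
    Real.rpow_neg hr.le, Real.rpow_natCast]
  ring

open MvPolynomial in
/-- Gaussian integrals of homogeneous polynomials of even degree as integrals over an affine
hyperplane. -/
theorem gaussInt_eq_integral_hyperplane {d j : ℕ} {P : MvPolynomial (Fin (d + 1)) ℝ}
    (hP : P.IsHomogeneous (2 * j)) :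
    gaussInt P = Real.Gamma (((d : ℝ) + 1) / 2 + j) *
      ∫ s : Evec d, poissonWeight d s * (eval (fun i => upP d s 1 i) P / ‖upP d s 1‖ ^ (2 * j)) := by
  set K : ℝ → Evec d → ℝ := fun t s =>
    eval (fun i => upP d s 1 i) P * (|t| ^ (d + 2 * j) * Real.exp (-‖upP d s 1‖ ^ 2 * t ^ 2)) with hK
  have hr : ∀ s : Evec d, 0 < ‖upP d s 1‖ := fun s => one_pos.trans_le (one_le_norm_upP_one d s)
  have hcP : Continuous fun s : Evec d => eval (fun i => upP d s 1 i) P :=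
    (continuous_mvPolynomial_eval P).comp (continuous_upP_one d)
  have hint : ∀ s, ∫ t, K t s = Real.Gamma (((d : ℝ) + 1) / 2 + j) *
      (poissonWeight d s * (eval (fun i => upP d s 1 i) P / ‖upP d s 1‖ ^ (2 * j))) := fun s => by
    simp only [hK]
    rw [integral_const_mul, integral_abs_pow_mul_exp _ (hr s), poissonWeight]
    rw [show (((d + 2 * j : ℕ) : ℝ) + 1) / 2 = ((d : ℝ) + 1) / 2 + j by push_cast; ring,
      show d + 2 * j + 1 = (d + 1) + 2 * j by ring, pow_add]
    field_simp
  have hKint : Integrable (Function.uncurry K) (volume.prod volume) := by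
    have hcont : Continuous (Function.uncurry K) := by
      have h2 : Continuous fun q : ℝ × Evec d => upP d q.2 1 :=
        (continuous_upP_one d).comp continuous_snd
      refine (hcP.comp continuous_snd).mul ((continuous_fst.abs.pow _).mul ?_)
      exact Real.continuous_exp.comp ((h2.norm.pow 2).neg.mul (continuous_fst.pow 2))
    rw [integrable_prod_iff' hcont.aestronglyMeasurable]
    refine ⟨.of_forall fun s => ?_, ?_⟩
    · exact (integrable_abs_pow_mul_exp (d + 2 * j) (pow_pos (hr s) 2)).const_mul
        (eval (fun i => upP d s 1 i) P)
    have hnorm : ∀ s, ∫ t, ‖Function.uncurry K (t, s)‖ = Real.Gamma (((d : ℝ) + 1) / 2 + j) *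
        (poissonWeight d s * (|eval (fun i => upP d s 1 i) P| / ‖upP d s 1‖ ^ (2 * j))) := fun s => by
      simp only [hK, Function.uncurry, norm_mul, Real.norm_eq_abs, abs_pow, abs_abs, Real.abs_exp]
      rw [integral_const_mul, integral_abs_pow_mul_exp _ (hr s), poissonWeight]
      rw [show (((d + 2 * j : ℕ) : ℝ) + 1) / 2 = ((d : ℝ) + 1) / 2 + j by push_cast; ring,
        show d + 2 * j + 1 = (d + 1) + 2 * j by ring, pow_add]
      field_simp
    simp only [hnorm]
    refine Integrable.const_mul ?_ _
    refine (integrable_poissonWeight_mul_eval hP).norm.congr (.of_forall fun s => ?_)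
    simp only [norm_mul, norm_div, Real.norm_eq_abs, abs_pow, abs_norm,
      abs_of_nonneg (poissonWeight_nonneg d s)]
  set F : Evec (d + 1) → ℝ := fun x => eval (fun i => x i) P * Real.exp (-‖x‖ ^ 2) with hF
  have hFint : Integrable F := integrable_mvPolynomial_mul_exp P
  have hslice : ∀ t : ℝ, t ≠ 0 → ∫ s, F (upP d s t) = ∫ s, K t s := fun t ht => by
    have h := Measure.integral_comp_smul (volume : Measure (Evec d)) (fun s => F (upP d s t)) t
    have h' : ∀ s, K t s = |t| ^ d * F (upP d (t • s) t) := fun s => by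
      have hup : upP d (t • s) t = t • upP d s 1 := by rw [← upP_smul, mul_one]
      have hev := hP.eval_smul t (fun i => upP d s 1 i)
      simp only [hK, hF, hup, norm_smul, PiLp.smul_apply, smul_eq_mul, hev, Real.norm_eq_abs, mul_pow,
        sq_abs]
      rw [pow_add, pow_mul, pow_mul, sq_abs]
      rw [show -‖upP d s 1‖ ^ 2 * t ^ 2 = -(t ^ 2 * ‖upP d s 1‖ ^ 2) by ring]
      ring
    simp only [h', integral_const_mul, h]
    simp only [finrank_euclideanSpace, Fintype.card_fin, smul_eq_mul, abs_inv, abs_pow]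
    field_simp
  have hmp := measurePreserving_upP d
  have hFint' : Integrable (fun q : Evec d × ℝ => F (upP d q.1 q.2)) (volume.prod volume) :=
    hmp.integrable_comp_of_integrable hFint
  calc gaussInt P = ∫ q : Evec d × ℝ, F (upP d q.1 q.2) := by
        rw [gaussInt, ← hmp.map_eq, integral_map hmp.measurable.aemeasurable]
        rw [hmp.map_eq]
        exact hFint.aestronglyMeasurable
    _ = ∫ t, ∫ s, F (upP d s t) := integral_prod_symm _ hFint'
    _ = ∫ t, ∫ s, K t s := by
        refine integral_congr_ae ?_
        filter_upwards [Measure.ae_ne volume (0 : ℝ)] with t ht using hslice t ht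
    _ = ∫ s, ∫ t, K t s := integral_integral_swap hKint
    _ = _ := by simp only [hint, integral_const_mul]

theorem omegaS_eq {m : ℕ} (hm : 0 < m) :
    omegaS m = 2 * Real.pi ^ ((m : ℝ) / 2) / Real.Gamma ((m : ℝ) / 2) := by
  have : Nonempty (Fin m) := ⟨⟨0, hm⟩⟩
  have h : sphereM m Set.univ = (volume : Measure (Evec m)).toSphere Set.univ := by
    rw [sphereM, Measure.map_apply measurable_subtype_coe MeasurableSet.univ, Set.preimage_univ]
  have hm' : (0 : ℝ) < (m : ℝ) / 2 := by positivity
  rw [omegaS, h, Measure.toSphere_apply_univ, EuclideanSpace.volume_ball]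
  simp only [finrank_euclideanSpace, Fintype.card_fin, ENNReal.toReal_mul, ENNReal.toReal_natCast,
    ENNReal.ofReal_one, one_pow, one_mul]
  rw [ENNReal.toReal_ofReal (by positivity), Real.Gamma_add_one hm'.ne', Real.sqrt_eq_rpow,
    ← Real.rpow_natCast, ← Real.rpow_mul Real.pi_pos.le, show (1 / 2 : ℝ) * m = m / 2 by ring]
  have := Real.Gamma_pos_of_pos hm'
  field_simp

/-- A terminating case of Gauss's summation formula. -/
theorem sum_choose_factorial_div_Gamma {c : ℝ} (hc : 1 < c) {k N : ℕ} (hN : k < N) :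
    (c - 1 + k) * ∑ j ∈ Finset.range N,
        (-1 : ℝ) ^ j * (j.factorial * k.choose j) / Real.Gamma (c + j)
      = (c - 1) / Real.Gamma c := by
  set t : ℕ → ℝ := fun j => (-1 : ℝ) ^ j * (j.factorial * k.choose j) / Real.Gamma (c + j) with ht
  have hrec : ∀ j, (c + j) * t (j + 1) = (j - k) * t j := fun j => by
    have hpos : 0 < c + j := by positivity
    have hG := Real.Gamma_pos_of_pos hpos
    have hch : ((j : ℝ) + 1) * k.choose (j + 1) = (k - j) * k.choose j := by
      rcases le_or_gt j k with h | h
      · have := Nat.choose_succ_right_eq k j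
        have h2 : (k.choose (j + 1) : ℝ) * (j + 1) = k.choose j * (k - j) := by
          rw [← Nat.cast_sub h]; exact_mod_cast this
        linarith
      · simp [Nat.choose_eq_zero_of_lt h, Nat.choose_eq_zero_of_lt (h.trans (Nat.lt_succ_self j))]
    simp only [ht]
    rw [show c + ((j + 1 : ℕ) : ℝ) = (c + j) + 1 by push_cast; ring, Real.Gamma_add_one hpos.ne',
      Nat.factorial_succ, pow_succ]
    push_cast
    field_simp
    linear_combination (-1) * hch
  have htel : ∀ j, (c - 1 + k) * t j = (c + j - 1) * t j - (c + (j + 1 : ℕ) - 1) * t (j + 1) := by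
    intro j
    have := hrec j
    push_cast
    linear_combination this
  rw [Finset.mul_sum, Finset.sum_congr rfl fun j _ => htel j,
    Finset.sum_range_sub' (fun j : ℕ => (c + j - 1) * t j) N]
  simp [ht, Nat.choose_eq_zero_of_lt hN]
  ring

open MvPolynomial in
/-- The half-space Poisson kernel has total mass one on `ℋ_k`. -/
theorem IsHk.cmk_mul_integral {d k : ℕ} (hm : 3 ≤ d + 1) {q : Evec (d + 1) → ℝ}
    (hq : IsHk (d + 1) k q) (v : Evec (d + 1)) :
    cmk (d + 1) k * ∫ s : Evec d, poissonWeight d s * q (reflv (upP d s 1) v) = q v := by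
  obtain ⟨N, H, hN, hhom, hharm, hval, hexp⟩ := hq.exists_taylor v
  set L : ℕ → MvPolynomial (Fin (d + 1)) ℝ := fun j => linForm v ^ j * H j with hL
  have hLhom : ∀ j, (L j).IsHomogeneous (2 * j) := fun j => by
    have h1 : (linForm v).IsHomogeneous 1 := by
      refine IsHomogeneous.sum _ _ _ fun i _ => ?_
      simpa using (isHomogeneous_C (Fin (d + 1)) (v i)).mul (isHomogeneous_X ℝ i)
    have := (h1.pow j).mul (hhom j)
    rwa [one_mul, ← two_mul] at this
  set c : ℝ := ((d : ℝ) + 1) / 2 with hc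
  have hd : (2 : ℝ) ≤ d := by exact_mod_cast (by omega : 2 ≤ d)
  have hc1 : 1 < c := by rw [hc]; linarith
  have hpt : ∀ s : Evec d, poissonWeight d s * q (reflv (upP d s 1) v)
      = ∑ j ∈ Finset.range N, (-2 : ℝ) ^ j *
        (poissonWeight d s * (eval (fun i => upP d s 1 i) (L j) / ‖upP d s 1‖ ^ (2 * j))) := by
    intro s
    set a := upP d s 1
    have : reflv a v = v + (-2 * ⟪a, v⟫ / ‖a‖ ^ 2) • a := by
      rw [reflv, sub_eq_add_neg, ← neg_smul]; congr 2; ring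
    rw [this, hexp, Finset.mul_sum]
    refine Finset.sum_congr rfl fun j _ => ?_
    simp only [hL, map_mul, map_pow, eval_linForm, div_pow, mul_pow, pow_mul]
    ring
  have hGam : ∀ j : ℕ, 0 < Real.Gamma (c + j) := fun j => Real.Gamma_pos_of_pos (by positivity)
  have hint : ∀ j, ∫ s : Evec d,
      poissonWeight d s * (eval (fun i => upP d s 1 i) (L j) / ‖upP d s 1‖ ^ (2 * j))
      = (j.factorial / 2 ^ j : ℝ) * (k.choose j * q v) * Real.pi ^ c / Real.Gamma (c + j) := by
    intro j
    have h1 := gaussInt_eq_integral_hyperplane (hLhom j)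
    rw [hL, gaussInt_linForm_pow_mul v j (H j) (hhom j) (hharm j), hval, gaussInt_one] at h1
    rw [eq_div_iff (hGam j).ne', mul_comm, ← h1, hc]
    push_cast
    rfl
  simp only [hpt]
  rw [integral_finsetSum _ fun j _ => (integrable_poissonWeight_mul_eval (hLhom j)).const_mul _]
  simp only [integral_const_mul, hint]
  have hsum := sum_choose_factorial_div_Gamma hc1 hN
  have hfac : ∑ j ∈ Finset.range N, (-2 : ℝ) ^ j *
      ((j.factorial / 2 ^ j : ℝ) * (k.choose j * q v) * Real.pi ^ c / Real.Gamma (c + j))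
      = q v * Real.pi ^ c * ∑ j ∈ Finset.range N,
        (-1 : ℝ) ^ j * (j.factorial * k.choose j) / Real.Gamma (c + j) := by
    rw [Finset.mul_sum]
    refine Finset.sum_congr rfl fun j _ => ?_
    rw [show (-2 : ℝ) ^ j = (-1) ^ j * 2 ^ j by rw [← mul_pow]; norm_num]
    have := (hGam j).ne'
    field_simp
  rw [hfac]
  have hG0 : 0 < Real.Gamma c := Real.Gamma_pos_of_pos (by positivity)
  have hck : 0 < c - 1 + k := by
    have := (Nat.cast_nonneg k : (0 : ℝ) ≤ k); linarith
  rw [mul_comm, ← eq_div_iff hck.ne'] at hsum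
  rw [cmk, omegaS_eq (by omega), hsum]
  have hcc : ((d + 1 : ℕ) : ℝ) / 2 = c := by rw [hc]; push_cast; rfl
  rw [hcc, show ((d + 1 : ℕ) : ℝ) + 2 * k - 2 = 2 * (c - 1 + k) by rw [hc]; push_cast; ring,
    show ((d + 1 : ℕ) : ℝ) - 2 = 2 * (c - 1) by rw [hc]; push_cast; ring]
  have hcm : 0 < c - 1 := by linarith
  have := Real.rpow_pos_of_pos Real.pi_pos c
  field_simp

/-- `reflv a` as a linear isometry. -/
def reflIso {m : ℕ} (a : Evec m) : Evec m ≃ₗᵢ[ℝ] Evec m := (ℝ ∙ a)ᗮ.reflection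

theorem reflIso_apply {m : ℕ} (a u : Evec m) : reflIso a u = reflv a u := by
  rw [reflIso, Submodule.reflection_orthogonal_apply, Submodule.reflection_singleton_apply, reflv]
  simp only [RCLike.ofReal_real_eq_id, id_eq, neg_sub]
  rw [← Nat.cast_smul_eq_nsmul ℝ, smul_smul]
  congr 2
  push_cast
  ring

theorem reflIso_reflIso {m : ℕ} (a u : Evec m) : reflIso a (reflIso a u) = u :=
  Submodule.reflection_reflection _ u

theorem norm_reflv {m : ℕ} (a u : Evec m) : ‖reflv a u‖ = ‖u‖ := by
  rw [← reflIso_apply, LinearIsometryEquiv.norm_map]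

theorem reflv_smul {m : ℕ} {c : ℝ} (hc : c ≠ 0) (a u : Evec m) : reflv (c • a) u = reflv a u := by
  rw [reflv, reflv, norm_smul, mul_pow, Real.norm_eq_abs, sq_abs, inner_smul_left, smul_smul]
  congr 2
  simp only [RCLike.conj_to_real]
  field_simp

open scoped Pointwise in
theorem measurePreserving_sphereM {m : ℕ} (A : Evec m ≃ₗᵢ[ℝ] Evec m) :
    MeasurePreserving A (sphereM m) (sphereM m) := by
  refine ⟨A.continuous.measurable, Measure.ext fun B hB => ?_⟩
  have happ : ∀ B : Set (Evec m), MeasurableSet B → sphereM m B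
      = m * volume (Set.Ioo (0 : ℝ) 1 • (sphere (0 : Evec m) 1 ∩ B)) := fun B hB => by
    rw [sphereM, Measure.map_apply measurable_subtype_coe hB, Measure.toSphere_apply' _
      (measurable_subtype_coe hB), Subtype.image_preimage_coe, finrank_euclideanSpace,
      Fintype.card_fin]
  rw [Measure.map_apply A.continuous.measurable hB, happ _ (A.continuous.measurable hB), happ B hB]
  congr 1
  have hset : Set.Ioo (0 : ℝ) 1 • (sphere (0 : Evec m) 1 ∩ A ⁻¹' B)
      = A ⁻¹' (Set.Ioo (0 : ℝ) 1 • (sphere (0 : Evec m) 1 ∩ B)) := by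
    ext x
    simp only [Set.mem_smul, Set.mem_preimage, Set.mem_inter_iff, mem_sphere_zero_iff_norm]
    constructor
    · rintro ⟨t, ht, z, ⟨hz, hzB⟩, rfl⟩
      exact ⟨t, ht, A z, ⟨by simpa using hz, hzB⟩, by simp⟩
    · rintro ⟨t, ht, z, ⟨hz, hzB⟩, hx⟩
      refine ⟨t, ht, A.symm z, ⟨by simpa using hz, by simpa using hzB⟩, ?_⟩
      rw [← map_smul, hx, LinearIsometryEquiv.symm_apply_apply]
  rw [hset]
  exact A.measurePreserving.measure_preimage_emb A.toHomeomorph.measurableEmbedding _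

instance (m : ℕ) : IsFiniteMeasure (sphereM m) := by
  unfold sphereM; infer_instance

theorem ae_sphereM_norm_eq_one (m : ℕ) : ∀ᵐ u ∂(sphereM m), ‖u‖ = 1 := by
  rw [sphereM, ae_map_iff measurable_subtype_coe.aemeasurable
    (measurableSet_eq_fun measurable_norm measurable_const)]
  exact .of_forall fun u => mem_sphere_zero_iff_norm.mp u.2

theorem continuous_reflv_upP_one (d : ℕ) :
    Continuous fun q : Evec d × Evec (d + 1) => reflv (upP d q.1 1) q.2 := by
  have h : Continuous fun q : Evec d × Evec (d + 1) => upP d q.1 1 :=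
    (continuous_upP_one d).comp continuous_fst
  refine continuous_snd.sub (Continuous.fun_smul ?_ h)
  refine (continuous_const.mul (h.inner continuous_snd)).div₀ (h.norm.pow 2) fun q => ?_
  have := one_le_norm_upP_one d q.1
  positivity

theorem integral_PH {d k : ℕ} {Z : Evec (d + 1) → Evec (d + 1) → ℝ} (hZ : IsZk (d + 1) k Z)
    {f : Evec d → Evec (d + 1) → ℝ}
    (hf : ∀ x' : Evec d, ∃ q, IsHk (d + 1) k q ∧
      ∀ u ∈ closedBall (0 : Evec (d + 1)) 1, f x' u = q u)
    (x' : Evec d) (y : ℝ) (t' : Evec d) {v : Evec (d + 1)} (hv : ‖v‖ ≤ 1) :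
    ∫ u, PH d k Z x' y t' u v * f t' u ∂(sphereM (d + 1))
      = cmk (d + 1) k * (y / ‖upP d (x' - t') y‖ ^ (d + 1) * f t' (reflv (upP d (x' - t') y) v)) := by
  obtain ⟨q, hq, hfq⟩ := hf t'
  simp only [PH, upP_sub, sub_zero]
  set a := upP d (x' - t') y
  have hZa : ∀ u, Z (reflv a u) v = Z u (reflv a v) := fun u => by
    rw [← reflIso_apply, ← reflIso_apply, ← hZ.2.2.2.2 (reflIso a) u, reflIso_reflIso]
  rw [hfq _ (by simpa [norm_reflv] using hv), ← hZ.2.1 q hq, ← integral_const_mul,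
    ← integral_const_mul]
  refine integral_congr_ae ?_
  filter_upwards [ae_sphereM_norm_eq_one (d + 1)] with u hu
  rw [hfq u (by simp [hu]), hZa]
  ring

/-- The Poisson integral in the rescaled variable. -/
theorem PHint_eq {d k : ℕ} {Z : Evec (d + 1) → Evec (d + 1) → ℝ} (hZ : IsZk (d + 1) k Z)
    {f : Evec d → Evec (d + 1) → ℝ}
    (hf : ∀ x' : Evec d, ∃ q, IsHk (d + 1) k q ∧
      ∀ u ∈ closedBall (0 : Evec (d + 1)) 1, f x' u = q u)
    (x' : Evec d) {y : ℝ} (hy : 0 < y) {v : Evec (d + 1)} (hv : ‖v‖ ≤ 1) :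
    PHint d k Z f x' y v
      = cmk (d + 1) k * ∫ s : Evec d, poissonWeight d s * f (x' - y • s) (reflv (upP d s 1) v) := by
  simp only [PHint, integral_PH hZ hf _ _ _ hv]
  rw [integral_const_mul]
  congr 1
  rw [← integral_sub_left_eq_self _ volume x']
  simp only [sub_sub_cancel]
  have h := Measure.integral_comp_smul (volume : Measure (Evec d))
    (fun t => y / ‖upP d t y‖ ^ (d + 1) * f (x' - t) (reflv (upP d t y) v)) y
  have hpt : ∀ s : Evec d, poissonWeight d s * f (x' - y • s) (reflv (upP d s 1) v)
      = y ^ d * (y / ‖upP d (y • s) y‖ ^ (d + 1) * f (x' - y • s) (reflv (upP d (y • s) y) v)) := by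
    intro s
    have hup : upP d (y • s) y = y • upP d s 1 := by rw [← upP_smul, mul_one]
    have := one_le_norm_upP_one d s
    rw [hup, reflv_smul hy.ne', norm_smul, Real.norm_of_nonneg hy.le, poissonWeight, mul_pow,
      pow_succ y]
    field_simp
  simp only [hpt]
  rw [integral_const_mul, h]
  simp only [finrank_euclideanSpace, Fintype.card_fin, smul_eq_mul, abs_inv, abs_pow,
    abs_of_pos hy]
  field_simp

/-- The finite measure on the boundary hyperplane with density `poissonWeight`. -/
def poissonMeasure (d : ℕ) : Measure (Evec d) :=
  volume.withDensity fun s => ENNReal.ofReal (poissonWeight d s)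

instance (d : ℕ) : IsFiniteMeasure (poissonMeasure d) :=
  isFiniteMeasure_withDensity_ofReal (integrable_poissonWeight d).2

theorem integral_poissonMeasure (d : ℕ) (g : Evec d → ℝ) :
    ∫ s, g s ∂(poissonMeasure d) = ∫ s, poissonWeight d s * g s := by
  rw [poissonMeasure, integral_withDensity_eq_integral_toReal_smul
    (continuous_poissonWeight d).measurable.ennreal_ofReal (.of_forall fun _ => ENNReal.ofReal_lt_top)]
  simp [ENNReal.toReal_ofReal (poissonWeight_nonneg d _)]

/-- The `p`-th power of the `L^p` modulus of continuity under translations of the hyperplane. -/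
def lpShift (d : ℕ) (p : ℝ) (f : Evec d → Evec (d + 1) → ℝ) (h : Evec d) : ENNReal :=
  ∫⁻ x' : Evec d, ∫⁻ u, ‖f (x' - h) u - f x' u‖ₑ ^ p ∂(sphereM (d + 1))

theorem lintegral_enorm_rpow_le {α : Type*} [MeasurableSpace α] (ν : Measure α) {p : ℝ}
    (hp : 1 ≤ p) {g : α → ℝ} (hg : AEStronglyMeasurable g ν) :
    (∫⁻ s, ‖g s‖ₑ ∂ν) ^ p ≤ (ν Set.univ) ^ (p - 1) * ∫⁻ s, ‖g s‖ₑ ^ p ∂ν := by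
  have hp0 : 0 < p := by linarith
  have h := eLpNorm_le_eLpNorm_mul_rpow_measure_univ (p := 1) (q := ENNReal.ofReal p) (μ := ν)
    (by simpa using hp) hg
  rw [eLpNorm_one_eq_lintegral_enorm, eLpNorm_eq_lintegral_rpow_enorm_toReal (by simpa using hp0)
    ENNReal.ofReal_ne_top, ENNReal.toReal_ofReal hp0.le] at h
  refine (ENNReal.rpow_le_rpow h hp0.le).trans_eq ?_
  rw [ENNReal.mul_rpow_of_nonneg _ _ hp0.le, ← ENNReal.rpow_mul, ← ENNReal.rpow_mul, mul_comm]
  congr 2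
  · simp; field_simp
  · field_simp; simp

theorem enorm_PHint_sub_rpow_le {d k : ℕ} (hm : 3 ≤ d + 1)
    {Z : Evec (d + 1) → Evec (d + 1) → ℝ} (hZ : IsZk (d + 1) k Z)
    {p : ℝ} (hp : 1 ≤ p) {f : Evec d → Evec (d + 1) → ℝ} (hf : MemLpH d k p f)
    (x' : Evec d) {y : ℝ} (hy : 0 < y) {v : Evec (d + 1)} (hv : ‖v‖ ≤ 1) :
    ‖PHint d k Z f x' y v - f x' v‖ₑ ^ p
      ≤ ‖cmk (d + 1) k‖ₑ ^ p * (poissonMeasure d Set.univ) ^ (p - 1) *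
        ∫⁻ s, ‖f (x' - y • s) (reflv (upP d s 1) v) - f x' (reflv (upP d s 1) v)‖ₑ ^ p
          ∂(poissonMeasure d) := by
  have hp0 : 0 < p := by linarith
  obtain ⟨hmeas, hH, -⟩ := hf
  have hR : Continuous fun s : Evec d => reflv (upP d s 1) v :=
    (continuous_reflv_upP_one d).comp (by fun_prop : Continuous fun s : Evec d => (s, v))
  obtain ⟨q, hq, hfq⟩ := hH x'
  have hfR : ∀ s : Evec d, f x' (reflv (upP d s 1) v) = q (reflv (upP d s 1) v) := fun s =>
    hfq _ (by simpa [norm_reflv] using hv)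
  have hqc : Continuous q := by
    obtain ⟨P, hP⟩ := hq.1
    rw [funext hP]
    exact continuous_mvPolynomial_eval P
  have hint0 : Integrable (fun s : Evec d => f x' (reflv (upP d s 1) v)) (poissonMeasure d) := by
    simp only [hfR]
    obtain ⟨C, hC⟩ := (isCompact_closedBall (0 : Evec (d + 1)) 1).exists_bound_of_continuousOn
      hqc.continuousOn
    exact .of_bound (hqc.comp hR).aestronglyMeasurable C
      (.of_forall fun s => hC _ (by simpa [norm_reflv] using hv))
  have hm1 : Measurable fun s : Evec d => f (x' - y • s) (reflv (upP d s 1) v) :=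
    hmeas.comp ((by fun_prop : Measurable fun s : Evec d => x' - y • s).prodMk hR.measurable)
  have hm2 : Measurable fun s : Evec d =>
      f (x' - y • s) (reflv (upP d s 1) v) - f x' (reflv (upP d s 1) v) :=
    hm1.sub (hmeas.comp (measurable_const.prodMk hR.measurable))
  have hfv : f x' v = cmk (d + 1) k * ∫ s, f x' (reflv (upP d s 1) v) ∂(poissonMeasure d) := by
    rw [integral_poissonMeasure, hfq v (by simpa using hv)]
    simp only [hfR]
    rw [hq.cmk_mul_integral hm]
  rw [PHint_eq hZ hH x' hy hv, ← integral_poissonMeasure, hfv, ← mul_sub, enorm_mul,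
    ENNReal.mul_rpow_of_nonneg _ _ hp0.le, mul_assoc]
  gcongr
  refine le_trans ?_ (lintegral_enorm_rpow_le _ hp hm2.aestronglyMeasurable)
  gcongr
  by_cases hint : Integrable (fun s : Evec d =>
      f (x' - y • s) (reflv (upP d s 1) v) - f x' (reflv (upP d s 1) v)) (poissonMeasure d)
  · have hint1 : Integrable (fun s : Evec d => f (x' - y • s) (reflv (upP d s 1) v))
        (poissonMeasure d) := 
      (hint.add hint0).congr (.of_forall fun s => sub_add_cancel _ _)
    rw [← integral_sub hint1 hint0]
    exact enorm_integral_le_lintegral_enorm _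
  · rw [Integrable, not_and, hasFiniteIntegral_iff_enorm, not_lt, top_le_iff] at hint
    rw [hint hm2.aestronglyMeasurable]
    exact le_top

theorem lpH_eq (d : ℕ) {p : ℝ} (hp : 0 ≤ p) (f : Evec d → Evec (d + 1) → ℝ) :
    lpH d p f = (∫⁻ x' : Evec d, ∫⁻ u, ‖f x' u‖ₑ ^ p ∂(sphereM (d + 1))) ^ (1 / p) := by
  simp only [lpH, ← ENNReal.ofReal_rpow_of_nonneg (abs_nonneg (f _ _)) hp,
    Real.enorm_eq_ofReal_abs]

theorem lintegral_enorm_PHint_sub_le {d k : ℕ} (hm : 3 ≤ d + 1)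
    {Z : Evec (d + 1) → Evec (d + 1) → ℝ} (hZ : IsZk (d + 1) k Z)
    {p : ℝ} (hp : 1 ≤ p) {f : Evec d → Evec (d + 1) → ℝ} (hf : MemLpH d k p f)
    {y : ℝ} (hy : 0 < y) :
    ∫⁻ x' : Evec d, ∫⁻ v, ‖PHint d k Z f x' y v - f x' v‖ₑ ^ p ∂(sphereM (d + 1))
      ≤ ‖cmk (d + 1) k‖ₑ ^ p * (poissonMeasure d Set.univ) ^ (p - 1) *
        ∫⁻ s, lpShift d p f (y • s) ∂(poissonMeasure d) := by
  have hmeas := hf.1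
  set C := ‖cmk (d + 1) k‖ₑ ^ p * (poissonMeasure d Set.univ) ^ (p - 1)
  have hF : Measurable fun z : (Evec d × Evec (d + 1)) × Evec d =>
      ‖f (z.1.1 - y • z.2) (reflv (upP d z.2 1) z.1.2) - f z.1.1 (reflv (upP d z.2 1) z.1.2)‖ₑ
        ^ p := by
    have hR : Measurable fun z : (Evec d × Evec (d + 1)) × Evec d => reflv (upP d z.2 1) z.1.2 :=
      (continuous_reflv_upP_one d).measurable.comp
        (by fun_prop : Measurable fun z : (Evec d × Evec (d + 1)) × Evec d => (z.2, z.1.2))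
    exact ((hmeas.comp ((by fun_prop : Measurable fun z : (Evec d × Evec (d + 1)) × Evec d =>
      z.1.1 - y • z.2).prodMk hR)).sub (hmeas.comp (measurable_fst.fst.prodMk hR))).enorm.pow_const p
  calc _ ≤ ∫⁻ x' : Evec d, ∫⁻ v, C * ∫⁻ s, ‖f (x' - y • s) (reflv (upP d s 1) v)
          - f x' (reflv (upP d s 1) v)‖ₑ ^ p ∂(poissonMeasure d) ∂(sphereM (d + 1)) := by
        refine lintegral_mono fun x' => lintegral_mono_ae ?_
        filter_upwards [ae_sphereM_norm_eq_one (d + 1)] with v hv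
        exact enorm_PHint_sub_rpow_le hm hZ hp hf x' hy hv.le
    _ = C * ∫⁻ z, ∫⁻ s, ‖f (z.1 - y • s) (reflv (upP d s 1) z.2)
          - f z.1 (reflv (upP d s 1) z.2)‖ₑ ^ p ∂(poissonMeasure d)
          ∂((volume : Measure (Evec d)).prod (sphereM (d + 1))) := by
        rw [← lintegral_const_mul _ hF.lintegral_prod_right', lintegral_prod _
          (hF.lintegral_prod_right'.const_mul C).aemeasurable]
    _ = C * ∫⁻ s, lpShift d p f (y • s) ∂(poissonMeasure d) := by
        rw [lintegral_lintegral_swap hF.aemeasurable]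
        congr 1
        refine lintegral_congr fun s => ?_
        rw [lintegral_prod _ (by exact
          (hF.comp (measurable_id.prodMk (measurable_const (a := s)))).aemeasurable), lpShift]
        refine lintegral_congr fun x' => ?_
        have h := (measurePreserving_sphereM (reflIso (upP d s 1))).lintegral_comp_emb
          (reflIso (upP d s 1)).toHomeomorph.measurableEmbedding
          (fun u => ‖f (x' - y • s) u - f x' u‖ₑ ^ p)
        simpa only [reflIso_apply] using h

theorem MemLpH.memLp {d k : ℕ} {p : ℝ} (hp : 0 < p) {f : Evec d → Evec (d + 1) → ℝ}
    (hf : MemLpH d k p f) :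
    MemLp (fun q : Evec d × Evec (d + 1) => f q.1 q.2) (ENNReal.ofReal p)
      (volume.prod (sphereM (d + 1))) := by
  refine ⟨hf.1.aestronglyMeasurable, ?_⟩
  rw [eLpNorm_eq_lintegral_rpow_enorm_toReal (by simpa using hp) ENNReal.ofReal_ne_top,
    ENNReal.toReal_ofReal hp.le, lintegral_prod _ (hf.1.enorm.pow_const p).aemeasurable,
    ← lpH_eq d hp.le]
  exact hf.2.2

/-- Translation of the hyperplane variable. -/
def shiftMap (d : ℕ) (h : Evec d) : C(Evec d × Evec (d + 1), Evec d × Evec (d + 1)) where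
  toFun q := (q.1 - h, q.2)

theorem continuous_shiftMap (d : ℕ) : Continuous (shiftMap d) := by
  refine ContinuousMap.continuous_of_continuous_uncurry _ ?_
  change Continuous fun z : Evec d × (Evec d × Evec (d + 1)) => (z.2.1 - z.1, z.2.2)
  fun_prop

theorem measurePreserving_shiftMap (d : ℕ) (h : Evec d) :
    MeasurePreserving (shiftMap d h) (volume.prod (sphereM (d + 1)))
      (volume.prod (sphereM (d + 1))) :=
  (measurePreserving_sub_right volume h).prod (.id _)

theorem lpShift_eq {d : ℕ} {p : ℝ} (hp : 0 < p) {f : Evec d → Evec (d + 1) → ℝ}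
    (hf : Measurable (fun q : Evec d × Evec (d + 1) => f q.1 q.2)) (h : Evec d) :
    lpShift d p f h = eLpNorm ((fun q : Evec d × Evec (d + 1) => f q.1 q.2) ∘ shiftMap d h
      - fun q : Evec d × Evec (d + 1) => f q.1 q.2) (ENNReal.ofReal p)
      (volume.prod (sphereM (d + 1))) ^ p := by
  rw [eLpNorm_eq_lintegral_rpow_enorm_toReal (by simpa using hp) ENNReal.ofReal_ne_top,
    ENNReal.toReal_ofReal hp.le, ← ENNReal.rpow_mul, one_div, inv_mul_cancel₀ hp.ne',
    ENNReal.rpow_one, lintegral_prod]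
  · rfl
  · exact (((hf.comp (shiftMap d h).continuous.measurable).sub hf).enorm.pow_const p).aemeasurable

theorem tendsto_lpShift {d k : ℕ} {p : ℝ} (hp : 1 ≤ p) {f : Evec d → Evec (d + 1) → ℝ}
    (hf : MemLpH d k p f) : Tendsto (lpShift d p f) (𝓝 0) (𝓝 0) := by
  have hp0 : 0 < p := by linarith
  have : Fact (1 ≤ ENNReal.ofReal p) := ⟨by simpa using hp⟩
  have hF := hf.memLp hp0
  have hcont := (continuous_const (y := hF.toLp)).compMeasurePreservingLp (continuous_shiftMap d)
    (measurePreserving_shiftMap d) ENNReal.ofReal_ne_top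
  have hlim := (tendsto_iff_edist_tendsto_0.mp (hcont.tendsto 0)).ennrpow_const p
  rw [ENNReal.zero_rpow_of_pos hp0] at hlim
  refine hlim.congr fun h => ?_
  rw [lpShift_eq hp0 hf.1, Lp.toLp_compMeasurePreserving, Lp.toLp_compMeasurePreserving,
    Lp.edist_toLp_toLp]
  congr 3
  ext q
  simp [shiftMap]

theorem lpShift_le {d k : ℕ} {p : ℝ} (hp : 1 ≤ p) {f : Evec d → Evec (d + 1) → ℝ}
    (hf : MemLpH d k p f) (h : Evec d) :
    lpShift d p f h ≤ (2 * eLpNorm (fun q : Evec d × Evec (d + 1) => f q.1 q.2) (ENNReal.ofReal p)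
      (volume.prod (sphereM (d + 1)))) ^ p := by
  have hp0 : 0 < p := by linarith
  have hF := (hf.memLp hp0).1
  have hmp := measurePreserving_shiftMap d h
  rw [lpShift_eq hp0 hf.1]
  gcongr
  refine (eLpNorm_sub_le (hF.comp_measurePreserving hmp) hF (by simpa using hp)).trans_eq ?_
  rw [eLpNorm_comp_measurePreserving hF hmp, two_mul]

theorem measurable_lpShift {d k : ℕ} {p : ℝ} {f : Evec d → Evec (d + 1) → ℝ}
    (hf : MemLpH d k p f) : Measurable (lpShift d p f) := by
  have h : Measurable fun z : (Evec d × Evec d) × Evec (d + 1) =>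
      ‖f (z.1.2 - z.1.1) z.2 - f z.1.2 z.2‖ₑ ^ p :=
    ((hf.1.comp (by fun_prop : Measurable fun z : (Evec d × Evec d) × Evec (d + 1) =>
      (z.1.2 - z.1.1, z.2))).sub (hf.1.comp (by fun_prop : Measurable
        fun z : (Evec d × Evec d) × Evec (d + 1) => (z.1.2, z.2)))).enorm.pow_const p
  exact h.lintegral_prod_right'.lintegral_prod_right'

theorem tendsto_lintegral_lpShift {d k : ℕ} {p : ℝ} (hp : 1 ≤ p) {f : Evec d → Evec (d + 1) → ℝ}
    (hf : MemLpH d k p f) :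
    Tendsto (fun y : ℝ => ∫⁻ s, lpShift d p f (y • s) ∂(poissonMeasure d)) (𝓝[>] 0) (𝓝 0) := by
  have hp0 : 0 < p := by linarith
  have h := tendsto_lintegral_filter_of_dominated_convergence (μ := poissonMeasure d)
    (l := 𝓝[>] (0 : ℝ)) (F := fun y s => lpShift d p f (y • s)) (f := fun _ => 0)
    (fun _ => (2 * eLpNorm (fun q : Evec d × Evec (d + 1) => f q.1 q.2) (ENNReal.ofReal p)
      (volume.prod (sphereM (d + 1)))) ^ p)
    (.of_forall fun y => (measurable_lpShift hf).comp (measurable_const_smul y))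
    (.of_forall fun y => .of_forall fun s => lpShift_le hp hf _) ?_ (.of_forall fun s => ?_)
  · simpa using h
  · rw [lintegral_const]
    exact ENNReal.mul_ne_top (ENNReal.rpow_ne_top_of_nonneg hp0.le
      (ENNReal.mul_ne_top (by simp) (hf.memLp hp0).2.ne)) (measure_ne_top _ _)
  · refine (tendsto_lpShift hp hf).comp (tendsto_nhdsWithin_of_tendsto_nhds ?_)
    exact (by fun_prop : Continuous fun y : ℝ => y • s).tendsto' 0 0 (zero_smul ℝ s)

/-- `L^p` boundary convergence of the half-space Poisson integral.
Here `m = d+1 ≥ 3`. -/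
theorem stmt_5 (d k : ℕ) (hm : 3 ≤ d + 1) (hk : 1 ≤ k)
    (Z : Evec (d + 1) → Evec (d + 1) → ℝ) (hZ : IsZk (d + 1) k Z)
    (p : ℝ) (hp : 1 ≤ p)
    (f : Evec d → Evec (d + 1) → ℝ) (hf : MemLpH d k p f) :
    Tendsto (fun y : ℝ => lpH d p (fun x' v => PHint d k Z f x' y v - f x' v))
      (𝓝[>] (0 : ℝ)) (𝓝 0) := by
  have hp0 : 0 < p := by linarith
  have hC : ‖cmk (d + 1) k‖ₑ ^ p * (poissonMeasure d Set.univ) ^ (p - 1) ≠ ⊤ :=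
    ENNReal.mul_ne_top (ENNReal.rpow_ne_top_of_nonneg hp0.le enorm_ne_top)
      (ENNReal.rpow_ne_top_of_nonneg (by linarith) (measure_ne_top _ _))
  have hlim := (ENNReal.Tendsto.const_mul (tendsto_lintegral_lpShift hp hf)
    (.inr hC)).ennrpow_const (1 / p)
  rw [mul_zero, ENNReal.zero_rpow_of_pos (by positivity)] at hlim
  refine tendsto_of_tendsto_of_tendsto_of_le_of_le' tendsto_const_nhds hlim
    (.of_forall fun _ => zero_le) ?_
  filter_upwards [self_mem_nhdsWithin] with y hy
  rw [lpH_eq d hp0.le]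
  gcongr
  exact lintegral_enorm_PHint_sub_le hm hZ hp hf hy
end
end

section
/- Let m ≥ 2 and let x, ζ be nonzero vectors in ℝ^m with x ≠ ζ. Then: (1) |x/|x|² − ζ/|ζ|²| = |x−ζ|/(|x|·|ζ|); and (2) for every u ∈ ℝ^m, R_{x/|x|² − ζ/|ζ|²}(u) = R_x(R_{x−ζ}(R_ζ(u))). (This is the inversion case of the Möbius covariance lemma; in Clifford notation it expresses the identities x^{-1} − ζ^{-1} = −x^{-1}(x−ζ)ζ^{-1} = −ζ^{-1}(x−ζ)x^{-1}.) -/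
noncomputable section

open MeasureTheory Metric Filter Topology
open scoped RealInnerProductSpace

/-- The distance between the inversions of two nonzero vectors in the unit sphere. -/
theorem norm_inversion_sub_inversion {E : Type*} [NormedAddCommGroup E] [InnerProductSpace ℝ E]
    {x y : E} (hx : x ≠ 0) (hy : y ≠ 0) :
    ‖(‖x‖ ^ 2)⁻¹ • x - (‖y‖ ^ 2)⁻¹ • y‖ = ‖x - y‖ / (‖x‖ * ‖y‖) := by
  have h := dist_div_norm_sq_smul hx hy 1
  simp only [dist_eq_norm, one_pow, one_div, inv_pow] at h
  rw [h, div_eq_inv_mul]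

/-- inversion case of the Möbius covariance lemma, Lemma `lem1`. -/
theorem stmt_6 (m : ℕ) (hm : 2 ≤ m) (x ζ : Evec m) (hx : x ≠ 0) (hζ : ζ ≠ 0)
    (hxζ : x ≠ ζ) :
    ‖(‖x‖ ^ 2)⁻¹ • x - (‖ζ‖ ^ 2)⁻¹ • ζ‖ = ‖x - ζ‖ / (‖x‖ * ‖ζ‖) ∧
    ∀ u : Evec m,
      reflv ((‖x‖ ^ 2)⁻¹ • x - (‖ζ‖ ^ 2)⁻¹ • ζ) u =
        reflv x (reflv (x - ζ) (reflv ζ u)) := by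
  have hnorm := norm_inversion_sub_inversion hx hζ
  refine ⟨hnorm, fun u => ?_⟩
  have ha : ‖x‖ ^ 2 ≠ 0 := by simpa using hx
  have hc : ‖ζ‖ ^ 2 ≠ 0 := by simpa using hζ
  have hd : ‖x - ζ‖ ^ 2 ≠ 0 := by simpa [sub_eq_zero] using hxζ
  have hD := norm_sub_sq_real x ζ
  rw [hD] at hd
  simp only [reflv, hnorm, div_pow, mul_pow, hD, inner_sub_left, inner_sub_right,
    real_inner_smul_left, real_inner_smul_right, real_inner_self_eq_norm_sq]
  generalize ‖x‖ ^ 2 = a at *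
  generalize ‖ζ‖ ^ 2 = c at *
  generalize ⟪x, ζ⟫ = b at *
  match_scalars <;> field_simp <;> ring
end
end
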